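/- Let Γ be a group generated by a finite set S, let L be an (r,k)-rule, and let α and β be weakly equivalent free p.m.p. actions of Γ on standard Borel probability spaces (X, μ) and (Y, ν) respectively. If for every ε > 0 the action β has an (ε, L)-good coloring, then for every ε > 0 the action α has an (ε, L)-good coloring as well. -/

import Mathlib

open MeasureTheory

/-- A probability-measure-preserving action of a group `G` on a measure space. -/
structure PMP (G : Type*) [Group G] (X : Type*) [MeasurableSpace X] (μ : Measure X) where
  act : G → X → X
  measurable : ∀ γ, Measurable (act γ)
  preserves : ∀ γ, MeasurePreserving (act γ) μ μ
  act_one : ∀ x, act 1 x = x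
  act_mul : ∀ γ₁ γ₂ x, act (γ₁ * γ₂) x = act γ₁ (act γ₂ x)

/-- `f` weakly contains `g`. -/
def WeaklyContains {G : Type*} [Group G] {X Y : Type*} [MeasurableSpace X] [MeasurableSpace Y]
    {μ : Measure X} {ν : Measure Y} (f : PMP G X μ) (g : PMP G Y ν) : Prop :=
  ∀ n : ℕ, 1 ≤ n → ∀ C : Y → Fin n, Measurable C →
    ∀ F : Finset G, ∀ ε : ℝ, 0 < ε →
      ∃ D : X → Fin n, Measurable D ∧
        ∀ i j : Fin n, ∀ γ ∈ F,
          |(μ (f.act γ '' (D ⁻¹' {i}) ∩ D ⁻¹' {j})).toReal -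
            (ν (g.act γ '' (C ⁻¹' {i}) ∩ C ⁻¹' {j})).toReal| ≤ ε

/-- Weak equivalence of p.m.p. actions. -/
def WeaklyEquivalent {G : Type*} [Group G] {X Y : Type*} [MeasurableSpace X] [MeasurableSpace Y]
    {μ : Measure X} {ν : Measure Y} (f : PMP G X μ) (g : PMP G Y ν) : Prop :=
  WeaklyContains f g ∧ WeaklyContains g f

/-- The action `f` is (essentially) free. -/
def IsFreeAction {G : Type*} [Group G] {X : Type*} [MeasurableSpace X] {μ : Measure X}
    (f : PMP G X μ) : Prop :=
  ∀ᵐ x ∂μ, ∀ γ : G, f.act γ x = x → γ = 1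

/-- The ball of radius `r` around the identity in the Cayley graph `Cay(Γ, S)`. -/
def cayleyBall {Γ : Type*} [Group Γ] (S : Finset Γ) (r : ℕ) : Set Γ :=
  {γ | ∃ l : List Γ, l.length ≤ r ∧ (∀ x ∈ l, x ∈ S ∨ x⁻¹ ∈ S) ∧ l.prod = γ}

/-- The `k`-coloring of the `r`-ball around `x` induced by `φ` and the action `f`. -/
def ballColoring {Γ X : Type*} [Group Γ] [MeasurableSpace X] {μ : Measure X}
    (f : PMP Γ X μ) (S : Finset Γ) (r k : ℕ) (φ : X → Fin k) (x : X) :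
    cayleyBall S r → Fin k :=
  fun γ => φ (f.act ↑γ x)

/-- `φ` is an `(ε, L)`-good coloring for the action `f`. -/
def GoodColoring {Γ X : Type*} [Group Γ] [MeasurableSpace X] {μ : Measure X}
    (f : PMP Γ X μ) (S : Finset Γ) {r k : ℕ} (L : Set (cayleyBall S r → Fin k))
    (ε : ℝ) (φ : X → Fin k) : Prop :=
  Measurable φ ∧ 1 - ε ≤ (μ {x | ballColoring f S r k φ x ∈ L}).toReal

/-- The action `f` almost satisfies the rule `L`. -/
def AlmostSatisfies {Γ X : Type*} [Group Γ] [MeasurableSpace X] {μ : Measure X}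
    (f : PMP Γ X μ) (S : Finset Γ) {r k : ℕ} (L : Set (cayleyBall S r → Fin k)) : Prop :=
  ∀ ε : ℝ, 0 < ε → ∃ φ : X → Fin k, GoodColoring f S L ε φ

/-- The action `f` properly satisfies the rule `L`. -/
def ProperlySatisfies {Γ X : Type*} [Group Γ] [MeasurableSpace X] {μ : Measure X}
    (f : PMP Γ X μ) (S : Finset Γ) {r k : ℕ} (L : Set (cayleyBall S r → Fin k)) : Prop :=
  ∃ φ : X → Fin k, Measurable φ ∧ μ {x | ballColoring f S r k φ x ∈ L} = 1

/-!
Fix a coloring `φ` for `β` and record at each point the pattern that it shows through the finite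
window `B_r`. Weak containment copies the partition of `Y` into pairs (color, pattern) to a
partition of `X`, and it controls the joint law of the labels at `x` and `γ • x` for each `γ` in
the window. For `β` the pattern at `y`, read at `γ`, always equals the color at `γ • y`. For `α`
this therefore fails only on a small set, off which the copied pattern is the one shown by the
copied color. So patterns have almost the same law under `φ` and under its copy.
-/

/-- The pattern of a coloring `φ` around `x`, seen through a window of group elements `g i`; for the
inclusion of the ball of radius `r` as window it is `ballColoring`. -/
def PMP.pattern {Γ X ι κ : Type*} [Group Γ] [MeasurableSpace X] {μ : Measure X}
    (f : PMP Γ X μ) (g : ι → Γ) (φ : X → κ) (x : X) : ι → κ :=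
  fun i => φ (f.act (g i) x)

theorem finite_cayleyBall {Γ : Type*} [Group Γ] (S : Finset Γ) (r : ℕ) :
    (cayleyBall S r).Finite := by
  let A : Set Γ := {x | x ∈ S ∨ x⁻¹ ∈ S}
  have hA : A.Finite := S.finite_toSet.union S.finite_toSet.inv
  have : Finite A := hA.to_subtype
  refine ((List.finite_length_le A r).image fun l => (l.map Subtype.val).prod).subset ?_
  rintro γ ⟨l, hl, hlS, rfl⟩
  lift l to List A using hlS
  exact ⟨l, by simpa using hl, rfl⟩

theorem abs_measureReal_sub_le_card_mul {T : Type*} [Fintype T] [MeasurableSpace T]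
    [MeasurableSingletonClass T] {P Q : Measure T} [SigmaFinite P] [SigmaFinite Q] {ε : ℝ}
    (h : ∀ t, |P.real {t} - Q.real {t}| ≤ ε) (A : Set T) :
    |P.real A - Q.real A| ≤ Fintype.card T * ε := by
  classical
  calc |P.real A - Q.real A|
      = |∑ t ∈ A.toFinset, (P.real {t} - Q.real {t})| := by simp [Finset.sum_sub_distrib]
    _ ≤ ∑ t ∈ A.toFinset, |P.real {t} - Q.real {t}| := Finset.abs_sum_le_sum_abs _ _
    _ ≤ ∑ t, |P.real {t} - Q.real {t}| :=
        Finset.sum_le_univ_sum_of_nonneg fun _ => abs_nonneg _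
    _ ≤ ∑ _t : T, ε := Finset.sum_le_sum fun t _ => h t
    _ = Fintype.card T * ε := by simp

theorem measureReal_ne_le_card_mul {X ι : Type*} {κ : ι → Type*} [Fintype ι] [MeasurableSpace X]
    {μ : Measure X} {u v : X → ∀ i, κ i} {ε : ℝ}
    (h : ∀ i, μ.real {x | u x i ≠ v x i} ≤ ε) :
    μ.real {x | u x ≠ v x} ≤ Fintype.card ι * ε := by
  calc μ.real {x | u x ≠ v x}
      = μ.real (⋃ i, {x | u x i ≠ v x i}) := by
        simp only [Function.ne_iff, Set.ofPred_exists]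
    _ ≤ ∑ i, μ.real {x | u x i ≠ v x i} := measureReal_iUnion_fintype_le _
    _ ≤ ∑ _i : ι, ε := Finset.sum_le_sum fun i _ => h i
    _ = Fintype.card ι * ε := by simp

theorem abs_measureReal_preimage_sub_le_measureReal_ne {X T : Type*} [MeasurableSpace X]
    [MeasurableSpace T] {μ : Measure X} [IsFiniteMeasure μ] {u v : X → T} (hu : Measurable u)
    (hv : Measurable v) {A : Set T} (hA : MeasurableSet A) :
    |μ.real (u ⁻¹' A) - μ.real (v ⁻¹' A)| ≤ μ.real {x | u x ≠ v x} := by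
  have hsub : symmDiff (u ⁻¹' A) (v ⁻¹' A) ⊆ {x | u x ≠ v x} := by
    rintro x (⟨hux, hvx⟩ | ⟨hvx, hux⟩) huv
    · exact hvx (huv ▸ hux : v x ∈ A)
    · exact hux (huv ▸ hvx : u x ∈ A)
  exact (abs_measureReal_sub_le_measureReal_symmDiff (hu hA).nullMeasurableSet
    (hv hA).nullMeasurableSet).trans (measureReal_mono hsub)

section Action

variable {Γ X Y : Type*} [Group Γ] [MeasurableSpace X] [MeasurableSpace Y]
  {μ : Measure X} {ν : Measure Y}

namespace PMP

theorem leftInverse_act_inv (f : PMP Γ X μ) (γ : Γ) :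
    Function.LeftInverse (f.act γ⁻¹) (f.act γ) := fun x => by
  rw [← f.act_mul, inv_mul_cancel, f.act_one]

theorem rightInverse_act_inv (f : PMP Γ X μ) (γ : Γ) :
    Function.RightInverse (f.act γ⁻¹) (f.act γ) := fun x => by
  rw [← f.act_mul, mul_inv_cancel, f.act_one]

theorem image_act_eq_preimage (f : PMP Γ X μ) (γ : Γ) (s : Set X) :
    f.act γ '' s = f.act γ⁻¹ ⁻¹' s :=
  congrFun (Set.image_eq_preimage_of_inverse (f.leftInverse_act_inv γ)
    (f.rightInverse_act_inv γ)) s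

theorem measureReal_image_act_inter (f : PMP Γ X μ) (γ : Γ) {s t : Set X}
    (hs : MeasurableSet s) (ht : MeasurableSet t) :
    μ.real (f.act γ '' s ∩ t) = μ.real (s ∩ f.act γ ⁻¹' t) := by
  have hst : MeasurableSet (f.act γ '' s ∩ t) := by
    rw [f.image_act_eq_preimage]
    exact (f.measurable _ hs).inter ht
  rw [← (f.preserves γ).measureReal_preimage hst.nullMeasurableSet, Set.preimage_inter,
    Set.preimage_image_eq s (f.leftInverse_act_inv γ).injective]

theorem measurable_pattern {ι κ : Type*} [MeasurableSpace κ] (f : PMP Γ X μ) (g : ι → Γ)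
    {φ : X → κ} (hφ : Measurable φ) : Measurable (f.pattern g φ) :=
  measurable_pi_lambda _ fun i => hφ.comp (f.measurable (g i))

end PMP

namespace WeaklyContains

theorem exists_approx_joint_singleton {T : Type*} [Finite T] [Nonempty T] [MeasurableSpace T]
    [MeasurableSingletonClass T] {α : PMP Γ X μ} {β : PMP Γ Y ν} (h : WeaklyContains α β)
    {C : Y → T} (hC : Measurable C) (F : Finset Γ) {ε : ℝ} (hε : 0 < ε) :
    ∃ D : X → T, Measurable D ∧ ∀ γ ∈ F, ∀ s t : T,
      |μ.real (D ⁻¹' {s} ∩ α.act γ ⁻¹' (D ⁻¹' {t})) -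
        ν.real (C ⁻¹' {s} ∩ β.act γ ⁻¹' (C ⁻¹' {t}))| ≤ ε := by
  cases nonempty_fintype T
  let e := Fintype.equivFin T
  obtain ⟨D, hD, hDC⟩ := h (Fintype.card T) Fintype.card_pos (e ∘ C)
    ((measurable_of_countable e).comp hC) F ε hε
  have hD' : Measurable (e.symm ∘ D) := (measurable_of_countable e.symm).comp hD
  have preimage_D (t : T) : D ⁻¹' {e t} = (e.symm ∘ D) ⁻¹' {t} := by
    ext x; simp [Equiv.symm_apply_eq]
  have preimage_C (t : T) : (e ∘ C) ⁻¹' {e t} = C ⁻¹' {t} := by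
    ext y; simp
  refine ⟨e.symm ∘ D, hD', fun γ hγ s t => ?_⟩
  rw [← α.measureReal_image_act_inter γ (hD' (.singleton s)) (hD' (.singleton t)),
    ← β.measureReal_image_act_inter γ (hC (.singleton s)) (hC (.singleton t)),
    ← preimage_D, ← preimage_D, ← preimage_C, ← preimage_C]
  exact hDC (e s) (e t) γ hγ

variable [IsFiniteMeasure μ] [IsFiniteMeasure ν]

theorem exists_approx_joint_relation {T : Type*} [Finite T] [Nonempty T] [MeasurableSpace T]
    [MeasurableSingletonClass T] {α : PMP Γ X μ} {β : PMP Γ Y ν} (h : WeaklyContains α β)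
    {C : Y → T} (hC : Measurable C) (F : Finset Γ) {ε : ℝ} (hε : 0 < ε) :
    ∃ D : X → T, Measurable D ∧ ∀ γ ∈ F, ∀ R : T → T → Prop,
      |μ.real {x | R (D x) (D (α.act γ x))} - ν.real {y | R (C y) (C (β.act γ y))}| ≤ ε := by
  cases nonempty_fintype T
  obtain ⟨D, hD, hDC⟩ := h.exists_approx_joint_singleton hC F
    (ε := ε / Fintype.card (T × T)) (by positivity)
  refine ⟨D, hD, fun γ hγ R => ?_⟩
  have hpD : Measurable fun x => (D x, D (α.act γ x)) := hD.prodMk (hD.comp (α.measurable γ))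
  have hpC : Measurable fun y => (C y, C (β.act γ y)) := hC.prodMk (hC.comp (β.measurable γ))
  have hsingleton (p : T × T) :
      |(μ.map fun x => (D x, D (α.act γ x))).real {p} -
        (ν.map fun y => (C y, C (β.act γ y))).real {p}| ≤ ε / Fintype.card (T × T) := by
    rw [map_measureReal_apply hpD (.singleton p), map_measureReal_apply hpC (.singleton p),
      ← Set.singleton_prod_singleton, Set.mk_preimage_prod, Set.mk_preimage_prod]
    exact hDC γ hγ p.1 p.2
  have hR := abs_measureReal_sub_le_card_mul hsingleton {p | R p.1 p.2}
  rwa [map_measureReal_apply hpD (Set.toFinite _).measurableSet,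
    map_measureReal_apply hpC (Set.toFinite _).measurableSet,
    mul_div_cancel₀ _ (by positivity)] at hR

theorem exists_approx_pattern {ι κ : Type*} [Finite ι] [Finite κ] [Nonempty κ]
    [MeasurableSpace κ] [MeasurableSingletonClass κ] {α : PMP Γ X μ} {β : PMP Γ Y ν}
    (h : WeaklyContains α β) (g : ι → Γ) {φ : Y → κ} (hφ : Measurable φ) {ε : ℝ} (hε : 0 < ε) :
    ∃ ψ : X → κ, Measurable ψ ∧ ∀ A : Set (ι → κ),
      |μ.real (α.pattern g ψ ⁻¹' A) - ν.real (β.pattern g φ ⁻¹' A)| ≤ ε := by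
  cases nonempty_fintype ι
  have hδ : 0 < ε / (Fintype.card ι + 1) := by positivity
  set δ := ε / (Fintype.card ι + 1)
  classical
  obtain ⟨D, hD, hDC⟩ := h.exists_approx_joint_relation (hφ.prodMk (β.measurable_pattern g hφ))
    (insert 1 (Finset.univ.image g)) hδ
  have hψ : Measurable fun x => (D x).1 := measurable_fst.comp hD
  have hη : Measurable fun x => (D x).2 := measurable_snd.comp hD
  refine ⟨fun x => (D x).1, hψ, fun A => ?_⟩
  have hA : MeasurableSet A := A.toFinite.measurableSet
  have hlabel : |μ.real ((fun x => (D x).2) ⁻¹' A) - ν.real (β.pattern g φ ⁻¹' A)| ≤ δ :=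
    hDC 1 (Finset.mem_insert_self _ _) fun s _ => s.2 ∈ A
  have hmismatch (i : ι) : μ.real {x | (D (α.act (g i) x)).1 ≠ (D x).2 i} ≤ δ := by
    -- The same event for `β` is empty: its label at `y` already lists the colors at `g i • y`.
    have := hDC (g i) (by simp) fun s t => t.1 ≠ s.2 i
    simpa [PMP.pattern, abs_of_nonneg] using this
  have hpattern :
      |μ.real (α.pattern g (fun x => (D x).1) ⁻¹' A) - μ.real ((fun x => (D x).2) ⁻¹' A)| ≤
        Fintype.card ι * δ :=
    (abs_measureReal_preimage_sub_le_measureReal_ne (α.measurable_pattern g hψ) hη hA).trans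
      (measureReal_ne_le_card_mul hmismatch)
  calc _ ≤ _ := abs_sub_le _ (μ.real ((fun x => (D x).2) ⁻¹' A)) _
    _ ≤ Fintype.card ι * δ + δ := add_le_add hpattern hlabel
    _ = (Fintype.card ι + 1) * δ := by ring
    _ = ε := mul_div_cancel₀ _ (by positivity)

end WeaklyContains

end Action

theorem goodColorings_transfer_of_weaklyEquivalent_general
    {Γ X Y : Type*} [Group Γ] [MeasurableSpace X] [MeasurableSpace Y]
    {μ : Measure X} [IsFiniteMeasure μ] {ν : Measure Y} [IsProbabilityMeasure ν]
    {α : PMP Γ X μ} {β : PMP Γ Y ν} (h : WeaklyContains α β)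
    {S : Finset Γ} {r k : ℕ} {L : Set (cayleyBall S r → Fin k)} (hβ : AlmostSatisfies β S L) :
    AlmostSatisfies α S L := by
  intro ε hε
  obtain ⟨φ, hφ, hφL⟩ := hβ (ε / 2) (half_pos hε)
  have : Finite (cayleyBall S r) := finite_cayleyBall S r
  have : Nonempty (Fin k) := (nonempty_of_isProbabilityMeasure ν).map φ
  obtain ⟨ψ, hψ, hψφ⟩ :=
    h.exists_approx_pattern ((↑) : cayleyBall S r → Γ) hφ (half_pos hε)
  refine ⟨ψ, hψ, ?_⟩
  change 1 - ε / 2 ≤ ν.real (β.pattern (↑) φ ⁻¹' L) at hφL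
  change 1 - ε ≤ μ.real (α.pattern (↑) ψ ⁻¹' L)
  linarith [(abs_le.mp (hψφ L)).1]

theorem goodColorings_transfer_of_weaklyEquivalent
    {Γ X Y : Type} [Group Γ] [Countable Γ] (S : Finset Γ)
    (hS : Subgroup.closure (S : Set Γ) = ⊤)
    [MeasurableSpace X] [StandardBorelSpace X] [MeasurableSpace Y] [StandardBorelSpace Y]
    (μ : Measure X) [IsProbabilityMeasure μ] (ν : Measure Y) [IsProbabilityMeasure ν]
    (r k : ℕ) (L : Set (cayleyBall S r → Fin k))
    (α : PMP Γ X μ) (β : PMP Γ Y ν)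
    (hαfree : IsFreeAction α) (hβfree : IsFreeAction β)
    (hwe : WeaklyEquivalent α β)
    (hβ : ∀ ε : ℝ, 0 < ε → ∃ φ : Y → Fin k, GoodColoring β S L ε φ) :
    ∀ ε : ℝ, 0 < ε → ∃ φ : X → Fin k, GoodColoring α S L ε φ :=
  goodColorings_transfer_of_weaklyEquivalent_general hwe.1 hβ
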